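/- For every k-cd c̄ for n nodes (n ≥ 1) and every m ∈ M(c̄), the expected number of nodes not colored m after one step of the 3-majority dynamics, μ̄_m(c̄) = n − μ_m(c̄), satisfies (n − c_m)·(1 − c_m²/n²) ≤ μ̄_m(c̄) ≤ (n − c_m)·(1 − s(c̄)·c_m/n²). -/

import Mathlib

open Finset

/-- The color appearing at least twice among `x, y, z`, or `x` if all three are distinct. -/
def maj3 {k : ℕ} (x y z : Fin k) : Fin k := if y = z then y else x

/-- Number of nodes with color `j` in the assignment `a`. -/
def cnt {n k : ℕ} (a : Fin n → Fin k) (j : Fin k) : ℕ :=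
  (Finset.univ.filter (fun i => a i = j)).card

/-- One sample for a round of the 3-majority dynamics: each node picks three nodes
(uniformly at random, with replacement). -/
abbrev Sample (n : ℕ) := Fin n → Fin n × Fin n × Fin n

/-- The assignment obtained from `a` after one step of the 3-majority dynamics with samples `S`. -/
def stepA {n k : ℕ} (a : Fin n → Fin k) (S : Sample n) : Fin n → Fin k :=
  fun i => maj3 (a (S i).1) (a (S i).2.1) (a (S i).2.2)

/-- Probability that the event `E` holds for the configuration obtained from `a`
after one step of the 3-majority dynamics (samples are uniform and independent). -/
noncomputable def stepPr {n k : ℕ} (a : Fin n → Fin k) (E : (Fin n → Fin k) → Prop) : ℝ :=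
  (Nat.card {S : Sample n // E (stepA a S)} : ℝ) / (Nat.card (Sample n) : ℝ)

/-- Expectation of `f` of the configuration obtained from `a` after one step of the
3-majority dynamics. -/
noncomputable def stepE {n k : ℕ} (a : Fin n → Fin k) (f : (Fin n → Fin k) → ℝ) : ℝ :=
  (∑ S : Sample n, f (stepA a S)) / (Nat.card (Sample n) : ℝ)

/-- `m(c̄)`: the size of the largest color class. -/
def mval {k : ℕ} (c : Fin k → ℕ) : ℕ := Finset.univ.sup c

/-- `M(c̄)`: the set of colors attaining the maximum. -/
def Mset {k : ℕ} (c : Fin k → ℕ) : Finset (Fin k) :=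
  Finset.univ.filter (fun j => c j = mval c)

/-- `s(c̄)`: the bias, i.e. the gap between the (unique) maximum and the second largest
color class; `0` if the maximum is not unique. -/
def sval {k : ℕ} (c : Fin k → ℕ) : ℕ :=
  if (Mset c).card = 1 then mval c - (Finset.univ \ Mset c).sup c else 0

/-- `α(c̄) = (n − m(c̄))·s(c̄)/n²`. -/
noncomputable def alphaV (n : ℕ) {k : ℕ} (c : Fin k → ℕ) : ℝ :=
  ((n : ℝ) - mval c) * sval c / (n : ℝ) ^ 2

/-- `γ(c̄) = (n·m(c̄) − Σ_h c_h²)/n² − α(c̄)`. -/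
noncomputable def gammaV (n : ℕ) {k : ℕ} (c : Fin k → ℕ) : ℝ :=
  ((n : ℝ) * mval c - ∑ h, (c h : ℝ) ^ 2) / (n : ℝ) ^ 2 - alphaV n c

/-- The trajectory of the 3-majority dynamics started at `a`, driven by the samples `S`
for the first `N` rounds. -/
def trajA {n k N : ℕ} (a : Fin n → Fin k) (S : Fin N → Sample n) : ℕ → Fin n → Fin k
  | 0 => a
  | t + 1 => if h : t < N then stepA (trajA a S t) (S ⟨t, h⟩) else trajA a S t

/-- Probability of an event `E` for an `N`-round run of the 3-majority dynamics
(all samples of all rounds are uniform and independent). -/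
noncomputable def runPr {n k : ℕ} (N : ℕ) (a : Fin n → Fin k)
    (E : (Fin N → Sample n) → Prop) : ℝ :=
  (Nat.card {S : Fin N → Sample n // E S} : ℝ) / (Nat.card (Fin N → Sample n) : ℝ)

theorem cnt_real {n k : ℕ} (a : Fin n → Fin k) (j : Fin k) :
    (cnt a j : ℝ) = ∑ i, (if a i = j then (1 : ℝ) else 0) := by
  simp [cnt]

theorem sum_eval {n : ℕ} (i : Fin n) (g : Fin n × Fin n × Fin n → ℝ) :
    (n : ℝ) ^ 3 * ∑ S : Sample n, g (S i) = (Nat.card (Sample n) : ℝ) * ∑ t, g t := by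
  have e := Equiv.funSplitAt i (Fin n × Fin n × Fin n)
  have h1 : ∑ S : Sample n, g (S i) =
      ∑ p : (Fin n × Fin n × Fin n) × ({j // j ≠ i} → Fin n × Fin n × Fin n), g p.1 :=
    Fintype.sum_equiv (Equiv.funSplitAt i (Fin n × Fin n × Fin n)) _ _ (fun S => by
      simp [Equiv.funSplitAt, Equiv.piSplitAt])
  have h2 : (Nat.card (Sample n)) = n ^ 3 *
      Nat.card ({j // j ≠ i} → Fin n × Fin n × Fin n) := by
    rw [Nat.card_congr (Equiv.funSplitAt i (Fin n × Fin n × Fin n)), Nat.card_prod]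
    congr 1
    simp
    ring
  rw [h1, h2, Fintype.sum_prod_type]
  simp only [Finset.sum_const, Finset.card_univ, nsmul_eq_mul, Nat.card_eq_fintype_card]
  rw [← Finset.mul_sum]
  push_cast
  ring

theorem sum_pair {n k : ℕ} (a : Fin n → Fin k) :
    ∑ y, ∑ z, (if a y = a z then (1 : ℝ) else 0) = ∑ h, (cnt a h : ℝ) ^ 2 := by
  have : ∀ y, ∑ z, (if a y = a z then (1 : ℝ) else 0) = (cnt a (a y) : ℝ) := by
    intro y
    rw [cnt_real]
    simp only [eq_comm]
  simp only [this]
  have h2 : ∀ y, (cnt a (a y) : ℝ) = ∑ h, (if a y = h then (cnt a h : ℝ) else 0) := by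
    intro y; simp
  rw [Finset.sum_congr rfl (fun y _ => h2 y), Finset.sum_comm]
  refine Finset.sum_congr rfl (fun h _ => ?_)
  rw [sq]
  nth_rewrite 2 [cnt_real]
  rw [Finset.sum_mul]
  refine Finset.sum_congr rfl (fun y _ => ?_)
  split_ifs <;> simp

theorem alg_sum {n : ℕ} (u : Fin n → ℝ) (v : Fin n → Fin n → ℝ) :
    ∑ x, ∑ y, ∑ z, (u y * u z + u x * (1 - v y z)) =
      n * (∑ i, u i) ^ 2 + (∑ i, u i) * ((n : ℝ) ^ 2 - ∑ y, ∑ z, v y z) := by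
  simp only [Finset.sum_add_distrib, ← Finset.mul_sum, ← Finset.sum_mul, Finset.sum_sub_distrib]
  simp
  ring

theorem sum_maj {n k : ℕ} (a : Fin n → Fin k) (m : Fin k) :
    ∑ t : Fin n × Fin n × Fin n, (if maj3 (a t.1) (a t.2.1) (a t.2.2) = m then (1 : ℝ) else 0) =
      n * (cnt a m : ℝ) ^ 2 + (cnt a m : ℝ) * ((n : ℝ) ^ 2 - ∑ h, (cnt a h : ℝ) ^ 2) := by
  have key : ∀ x y z : Fin n, (if maj3 (a x) (a y) (a z) = m then (1 : ℝ) else 0) =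
      (if a y = m then (1 : ℝ) else 0) * (if a z = m then (1 : ℝ) else 0) +
      (if a x = m then (1 : ℝ) else 0) * (1 - (if a y = a z then (1 : ℝ) else 0)) := by
    intro x y z
    unfold maj3
    by_cases h1 : a y = a z <;> by_cases h2 : a y = m <;> by_cases h3 : a z = m <;>
      by_cases h4 : a x = m <;> simp_all
  simp only [Fintype.sum_prod_type, key]
  rw [← sum_pair, cnt_real]
  exact alg_sum (fun i => if a i = m then (1 : ℝ) else 0)
    (fun y z => if a y = a z then (1 : ℝ) else 0)

theorem stepE_eq {n k : ℕ} (hn : 1 ≤ n) (a : Fin n → Fin k) (m : Fin k) :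
    stepE a (fun b => (cnt b m : ℝ)) =
      (n * (cnt a m : ℝ) ^ 2 + (cnt a m : ℝ) * ((n : ℝ) ^ 2 - ∑ h, (cnt a h : ℝ) ^ 2))
        / (n : ℝ) ^ 2 := by
  have hn0 : (n : ℝ) ≠ 0 := by positivity
  have : Nonempty (Fin n) := ⟨⟨0, hn⟩⟩
  have hN : (Nat.card (Sample n) : ℝ) ≠ 0 := by
    exact_mod_cast Nat.card_pos.ne'
  unfold stepE
  simp only [cnt_real (stepA a _)]
  rw [Finset.sum_comm, div_eq_div_iff hN (by positivity), ← sum_maj]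
  apply mul_left_cancel₀ hn0
  have : ∀ i : Fin n, (n : ℝ) ^ 3 * ∑ S : Sample n, (if stepA a S i = m then (1 : ℝ) else 0) =
      (Nat.card (Sample n) : ℝ) * ∑ t : Fin n × Fin n × Fin n,
        (if maj3 (a t.1) (a t.2.1) (a t.2.2) = m then (1 : ℝ) else 0) := fun i =>
    sum_eval i (fun t => if maj3 (a t.1) (a t.2.1) (a t.2.2) = m then (1 : ℝ) else 0)
  have h2 := Finset.sum_congr (rfl : (Finset.univ : Finset (Fin n)) = _) (fun i _ => this i)
  rw [← Finset.mul_sum] at h2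
  simp only [Finset.sum_const, Finset.card_univ, Fintype.card_fin, nsmul_eq_mul] at h2
  linarith

theorem sval_le {k : ℕ} (c : Fin k → ℕ) (m : Fin k) (hm : m ∈ Mset c) (h : Fin k) (hh : h ≠ m) :
    sval c + c h ≤ c m := by
  have hm' : c m = mval c := by simpa [Mset] using hm
  have hle : c h ≤ mval c := Finset.le_sup (f := c) (Finset.mem_univ h)
  unfold sval
  split_ifs with h1
  · obtain ⟨x, hx⟩ := Finset.card_eq_one.mp h1
    have hmx : m = x := by simpa [hx] using hm
    have : c h ≤ (Finset.univ \ Mset c).sup c :=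
      Finset.le_sup (f := c) (by simp [hx, ← hmx, hh])
    omega
  · omega

/-- Lemma (exp-minority): for every `m ∈ M(c̄)`, the expected number of nodes not colored `m`
after one step, `μ̄_m(c̄) = n − μ_m(c̄)`, satisfies
`(n − c_m)·(1 − c_m²/n²) ≤ μ̄_m(c̄) ≤ (n − c_m)·(1 − s(c̄)·c_m/n²)`. -/
theorem exp_minority (n k : ℕ) (hn : 1 ≤ n) (c : Fin k → ℕ) (hc : ∑ h, c h = n)
    (a : Fin n → Fin k) (ha : ∀ h, cnt a h = c h) (m : Fin k) (hm : m ∈ Mset c) :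
    ((n : ℝ) - (c m : ℝ)) * (1 - (c m : ℝ) ^ 2 / (n : ℝ) ^ 2) ≤
        (n : ℝ) - stepE a (fun b => (cnt b m : ℝ)) ∧
      (n : ℝ) - stepE a (fun b => (cnt b m : ℝ)) ≤
        ((n : ℝ) - (c m : ℝ)) * (1 - (sval c : ℝ) * (c m : ℝ) / (n : ℝ) ^ 2) := by
  have hn0 : (0 : ℝ) < n := by exact_mod_cast hn
  have hcR : ∑ h, (c h : ℝ) = n := by exact_mod_cast hc
  rw [stepE_eq hn]
  simp only [ha]
  set Q := ∑ h, (c h : ℝ) ^ 2 with hQ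
  have hQ1 : (c m : ℝ) ^ 2 ≤ Q :=
    Finset.single_le_sum (f := fun h => (c h : ℝ) ^ 2) (fun _ _ => by positivity)
      (Finset.mem_univ m)
  have hQ2 : ((n : ℝ) - c m) * sval c ≤ n * c m - Q := by
    have e1 : (n : ℝ) * c m - Q = ∑ h, (c h : ℝ) * ((c m : ℝ) - c h) := by
      rw [← hcR, hQ, Finset.sum_mul, ← Finset.sum_sub_distrib]
      exact Finset.sum_congr rfl (fun h _ => by ring)
    have e2 : ((n : ℝ) - c m) * sval c =
        ∑ h, (if h = m then (0 : ℝ) else (c h : ℝ) * sval c) := by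
      have : ∀ h, (if h = m then (0 : ℝ) else (c h : ℝ) * sval c) =
          (c h : ℝ) * sval c - (if h = m then (c h : ℝ) * sval c else 0) := by
        intro h; split_ifs <;> simp
      simp only [this, Finset.sum_sub_distrib, ← Finset.sum_mul, hcR]
      simp
      ring
    rw [e1, e2]
    refine Finset.sum_le_sum (fun h _ => ?_)
    split_ifs with hh
    · simp [hh]
    · have h3 : (sval c : ℝ) + c h ≤ c m := by exact_mod_cast sval_le c m hm h hh
      exact mul_le_mul_of_nonneg_left (by linarith) (by positivity)
  have hc0 : (0 : ℝ) ≤ c m := by positivity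
  have hmid : (n : ℝ) - (n * (c m : ℝ) ^ 2 + (c m : ℝ) * ((n : ℝ) ^ 2 - Q)) / (n : ℝ) ^ 2 =
      ((n : ℝ) - c m) - c m * (n * c m - Q) / (n : ℝ) ^ 2 := by
    field_simp
    ring
  rw [hmid]
  have hlo : c m * (n * c m - Q) / (n : ℝ) ^ 2 ≤ (c m * (n * c m - (c m : ℝ) ^ 2)) / (n : ℝ) ^ 2 := by
    gcongr
  have hup : (c m * (((n : ℝ) - c m) * sval c)) / (n : ℝ) ^ 2 ≤ c m * (n * c m - Q) / (n : ℝ) ^ 2 := by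
    gcongr
  constructor
  · refine le_trans (le_of_eq ?_) (sub_le_sub_left hlo _)
    ring
  · refine le_trans (sub_le_sub_left hup _) (le_of_eq ?_)
    ring
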